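/- Let D = (V, E; c; s, t) be a flow network in which every arc belongs to at least one s-t path. If the flow game Γ_D is convex, then every non-bottleneck arc e ∉ B satisfies c(e) ≥ Σ_{P ∈ 𝒫_e} c(P), i.e., its capacity accommodates the aggregate capacity of all s-t paths passing through it. -/

import Mathlib

open scoped Classical
open Finset

noncomputable section

/-- The arcs (consecutive vertex pairs) of a vertex list. -/
def arcsOf {V : Type*} [DecidableEq V] (vs : List V) : Finset (V × V) :=
  (vs.zip vs.tail).toFinset

/-- `vs` is the vertex list of a directed path from `a` to `b` using arcs of `E`,
with pairwise distinct vertices. -/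
def IsPathList {V : Type*} (E : Finset (V × V)) (a b : V) (vs : List V) : Prop :=
  vs.Nodup ∧ vs.head? = some a ∧ vs.getLast? = some b ∧
    vs.Chain' (fun x y => (x, y) ∈ E)

/-- `P` is (the arc set of) an `s`-`t` path in the network with arc set `E`. -/
def IsSTPath {V : Type*} [DecidableEq V] (E : Finset (V × V)) (s t : V)
    (P : Finset (V × V)) : Prop :=
  ∃ vs : List V, IsPathList E s t vs ∧ P = arcsOf vs

/-- The capacity of a path (arc set): the minimum capacity of its arcs. -/
def pathCap {V : Type*} (c : V × V → ℝ) (P : Finset (V × V)) : ℝ :=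
  sInf (c '' (P : Set (V × V)))

/-- `e` is a bottleneck arc of some `s`-`t` path, i.e. `e ∈ B`. -/
def IsBottleneck {V : Type*} [DecidableEq V] (E : Finset (V × V)) (c : V × V → ℝ)
    (s t : V) (e : V × V) : Prop :=
  ∃ P : Finset (V × V), IsSTPath E s t P ∧ e ∈ P ∧ c e = pathCap c P

/-- The finite set `𝒫` of all `s`-`t` paths (as arc sets). -/
def stPaths {V : Type*} [DecidableEq V] (E : Finset (V × V)) (s t : V) :
    Finset (Finset (V × V)) :=
  E.powerset.filter (fun P => IsSTPath E s t P)

/-- The value of a flow `f`: net flow out of the source `s`. -/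
def flowValue {V : Type*} [DecidableEq V] (E : Finset (V × V)) (s : V)
    (f : V × V → ℝ) : ℝ :=
  ∑ e ∈ E.filter (fun e => e.1 = s), f e - ∑ e ∈ E.filter (fun e => e.2 = s), f e

/-- `f` is a feasible flow on the coalition `S`. -/
def IsFeasibleFlow {V : Type*} [DecidableEq V] (E : Finset (V × V)) (c : V × V → ℝ)
    (s t : V) (S : Finset (V × V)) (f : V × V → ℝ) : Prop :=
  (∀ e ∈ E, 0 ≤ f e ∧ f e ≤ c e) ∧
  (∀ e, e ∉ S → f e = 0) ∧
  (∀ v, v ≠ s → v ≠ t →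
    ∑ e ∈ E.filter (fun e => e.2 = v), f e = ∑ e ∈ E.filter (fun e => e.1 = v), f e)

/-- `γ` is the characteristic function of the flow game on `D = (V,E;c;s,t)`:
for each coalition `S ⊆ E`, `γ S` is the maximum value of a feasible flow on `S`. -/
def IsFlowGame {V : Type*} [DecidableEq V] (E : Finset (V × V)) (c : V × V → ℝ)
    (s t : V) (γ : Finset (V × V) → ℝ) : Prop :=
  ∀ S : Finset (V × V), S ⊆ E →
    IsGreatest {x : ℝ | ∃ f, IsFeasibleFlow E c s t S f ∧ flowValue E s f = x} (γ S)

/-- The cooperative game `γ` with player set `E` is convex (supermodular). -/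
def GameConvex {V : Type*} [DecidableEq V] (E : Finset (V × V))
    (γ : Finset (V × V) → ℝ) : Prop :=
  ∀ e ∈ E, ∀ S T : Finset (V × V), S ⊆ T → T ⊆ E.erase e →
    γ (insert e S) - γ S ≤ γ (insert e T) - γ T

/-- The directed graph with arc set `E` contains a directed cycle. -/
def HasDirectedCycle {V : Type*} (E : Finset (V × V)) : Prop :=
  ∃ (v : V) (vs : List V), (v :: vs).Nodup ∧
    (v :: vs).Chain' (fun x y => (x, y) ∈ E) ∧
    ((v :: vs).getLast (List.cons_ne_nil v vs), v) ∈ E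

/-!
A feasible flow on `S` decomposes into nonnegative flows along the `s`-`t` paths in `S`, so
`γ S ≤ ∑ c(P)`, the sum running over these paths. When the game is convex the reverse inequality
holds as well, by induction on `S`: two different paths in `S` leave some vertex through different
arcs `e` and `e'`, no path uses both, so every path survives the deletion of `e` or of `e'`, and
convexity combined with inclusion–exclusion bounds `γ S` from below by the values at `S - e`,
`S - e'` and `S - e - e'`. Hence the path flows decomposing a maximum flow on `E` must carry
exactly `c(P)` along each path `P`, and the total they carry through an arc `e` is at most `c e`.
-/

theorem eq_nil_of_nodup_cons_of_getLast?_eq_head {α : Type*} {a : α} {l : List α}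
    (hl : (a :: l).Nodup) (hlast : (a :: l).getLast? = some a) : l = [] := by
  cases l with
  | nil => rfl
  | cons b l =>
    rw [List.getLast?_cons_cons] at hlast
    exact absurd (List.mem_of_getLast? hlast) hl.notMem

section PathCap

variable {V : Type*} {c : V × V → ℝ} {P : Finset (V × V)}

theorem pathCap_le {e : V × V} (he : e ∈ P) : pathCap c P ≤ c e :=
  csInf_le (P.finite_toSet.image c).bddBelow ⟨e, he, rfl⟩

theorem le_pathCap {m : ℝ} (hP : P.Nonempty) (hm : ∀ e ∈ P, m ≤ c e) : m ≤ pathCap c P :=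
  le_csInf (hP.to_set.image c) (Set.forall_mem_image.2 hm)

theorem pathCap_nonneg (hc : ∀ e ∈ P, 0 ≤ c e) : 0 ≤ pathCap c P :=
  Real.sInf_nonneg (Set.forall_mem_image.2 hc)

end PathCap

section FlowNetwork

variable {V : Type*} [DecidableEq V] {E S T P Q : Finset (V × V)} {s t : V}

section Paths

theorem arcsOf_singleton (a : V) : arcsOf [a] = ∅ := by
  simp [arcsOf]

theorem arcsOf_cons_cons (a b : V) (l : List V) :
    arcsOf (a :: b :: l) = insert (a, b) (arcsOf (b :: l)) := by
  simp [arcsOf]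

theorem fst_mem_of_mem_arcsOf {l : List V} {e : V × V} (he : e ∈ arcsOf l) : e.1 ∈ l :=
  (List.of_mem_zip (List.mem_toFinset.1 he)).1

theorem arcsOf_subset_iff_isChain (l : List V) :
    arcsOf l ⊆ E ↔ l.IsChain (fun x y => (x, y) ∈ E) := by
  induction l using List.twoStepInduction with
  | nil => simp [arcsOf]
  | singleton a => simp [arcsOf]
  | cons_cons a b l _ ih =>
    rw [arcsOf_cons_cons, insert_subset_iff, List.isChain_cons_cons, ih b]

theorem eq_of_mem_arcsOf_of_nodup {l : List V} (hl : l.Nodup) {v w w' : V}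
    (hw : (v, w) ∈ arcsOf l) (hw' : (v, w') ∈ arcsOf l) : w = w' := by
  simp only [arcsOf, List.mem_toFinset, List.mem_iff_getElem, List.getElem_zip,
    Prod.mk.injEq] at hw hw'
  obtain ⟨i, hi, hiv, rfl⟩ := hw
  obtain ⟨j, hj, hjv, rfl⟩ := hw'
  obtain rfl : i = j := hl.getElem_inj_iff.1 (hiv.trans hjv.symm)
  rfl

theorem exists_diverging_arcs_of_ne {a : V} {l l' : List V}
    (hl : (a :: l).Nodup) (hl' : (a :: l').Nodup)
    (hlast : (a :: l).getLast? = some t) (hlast' : (a :: l').getLast? = some t) (hne : l ≠ l') :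
    ∃ v w w', w ≠ w' ∧ (v, w) ∈ arcsOf (a :: l) ∧ (v, w') ∈ arcsOf (a :: l') := by
  induction l generalizing a l' with
  | nil =>
    obtain rfl : a = t := by simpa using hlast
    exact absurd (eq_nil_of_nodup_cons_of_getLast?_eq_head hl' hlast').symm hne
  | cons b l ih =>
    cases l' with
    | nil =>
      obtain rfl : a = t := by simpa using hlast'
      exact absurd (eq_nil_of_nodup_cons_of_getLast?_eq_head hl hlast) hne
    | cons b' l' =>
      simp only [arcsOf_cons_cons, mem_insert]
      by_cases hb : b = b'
      · subst hb
        rw [List.getLast?_cons_cons] at hlast hlast'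
        obtain ⟨v, w, w', hw, hmem, hmem'⟩ :=
          ih hl.of_cons hl'.of_cons hlast hlast' (ne_of_apply_ne (b :: ·) hne)
        exact ⟨v, w, w', hw, .inr hmem, .inr hmem'⟩
      · exact ⟨a, b, b', hb, .inl rfl, .inl rfl⟩

theorem isSTPath_iff :
    IsSTPath E s t P ↔ P ⊆ E ∧ ∃ l : List V, (s :: l).Nodup ∧ (s :: l).getLast? = some t ∧
      P = arcsOf (s :: l) := by
  constructor
  · rintro ⟨vs, ⟨hnodup, hhead, hlast, hchain⟩, rfl⟩
    obtain ⟨l, rfl⟩ := List.head?_eq_some_iff.1 hhead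
    exact ⟨(arcsOf_subset_iff_isChain _).2 hchain, l, hnodup, hlast, rfl⟩
  · rintro ⟨hPE, l, hnodup, hlast, rfl⟩
    exact ⟨s :: l, ⟨hnodup, rfl, hlast, (arcsOf_subset_iff_isChain _).1 hPE⟩, rfl⟩

namespace IsSTPath

theorem subset (hP : IsSTPath E s t P) : P ⊆ E :=
  (isSTPath_iff.1 hP).1

theorem of_subset (hP : IsSTPath E s t P) (hPS : P ⊆ S) : IsSTPath S s t P :=
  isSTPath_iff.2 ⟨hPS, (isSTPath_iff.1 hP).2⟩

theorem nonempty (hP : IsSTPath E s t P) (hst : s ≠ t) : P.Nonempty := by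
  obtain ⟨-, l, -, hlast, rfl⟩ := isSTPath_iff.1 hP
  cases l with
  | nil => exact absurd (by simpa using hlast) hst
  | cons b l => simp [arcsOf_cons_cons]

theorem eq_of_mem_of_mem (hP : IsSTPath E s t P) {v w w' : V}
    (hw : (v, w) ∈ P) (hw' : (v, w') ∈ P) : w = w' := by
  obtain ⟨-, l, hnodup, -, rfl⟩ := isSTPath_iff.1 hP
  exact eq_of_mem_arcsOf_of_nodup hnodup hw hw'

theorem exists_diverging_arcs (hP : IsSTPath E s t P) (hQ : IsSTPath E s t Q) (hPQ : P ≠ Q) :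
    ∃ v w w', w ≠ w' ∧ (v, w) ∈ P ∧ (v, w') ∈ Q := by
  obtain ⟨-, l, hl, hlast, rfl⟩ := isSTPath_iff.1 hP
  obtain ⟨-, l', hl', hlast', rfl⟩ := isSTPath_iff.1 hQ
  exact exists_diverging_arcs_of_ne hl hl' hlast hlast' (by rintro rfl; exact hPQ rfl)

end IsSTPath

theorem exists_isSTPath_of_reflTransGen
    (h : Relation.ReflTransGen (fun x y => (x, y) ∈ E) s t) : ∃ P, IsSTPath E s t P := by
  induction h using Relation.ReflTransGen.head_induction_on with
  | refl => exact ⟨∅, isSTPath_iff.2 ⟨empty_subset _, [], by simp [arcsOf_singleton]⟩⟩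
  | @head a b hab _ ih =>
    obtain ⟨_, hP⟩ := ih
    obtain ⟨hPE, l, hnodup, hlast, rfl⟩ := isSTPath_iff.1 hP
    by_cases ha : a ∈ b :: l
    · obtain ⟨l₁, l₂, hsplit⟩ := List.append_of_mem ha
      rw [arcsOf_subset_iff_isChain] at hPE
      rw [hsplit] at hPE hnodup hlast
      exact ⟨arcsOf (a :: l₂), isSTPath_iff.2
        ⟨(arcsOf_subset_iff_isChain _).2 hPE.right_of_append, l₂, hnodup.of_append_right,
          by simpa using hlast, rfl⟩⟩
    · refine ⟨arcsOf (a :: b :: l), isSTPath_iff.2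
        ⟨?_, b :: l, List.nodup_cons.2 ⟨ha, hnodup⟩, ?_, rfl⟩⟩
      · rw [arcsOf_cons_cons]
        exact insert_subset hab hPE
      · rwa [List.getLast?_cons_cons]

theorem mem_stPaths : P ∈ stPaths S s t ↔ IsSTPath S s t P := by
  simpa only [stPaths, mem_filter, mem_powerset] using and_iff_right_of_imp IsSTPath.subset

theorem mem_stPaths_iff_of_subset (hST : S ⊆ T) :
    P ∈ stPaths S s t ↔ P ∈ stPaths T s t ∧ P ⊆ S := by
  rw [mem_stPaths, mem_stPaths]
  exact ⟨fun hP => ⟨hP.of_subset (hP.subset.trans hST), hP.subset⟩,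
    fun ⟨hP, hPS⟩ => hP.of_subset hPS⟩

theorem stPaths_inter : stPaths (S ∩ T) s t = stPaths S s t ∩ stPaths T s t := by
  ext P
  rw [mem_inter, mem_stPaths_iff_of_subset inter_subset_left, mem_stPaths, mem_stPaths,
    subset_inter_iff]
  exact ⟨fun ⟨hP, _, hPT⟩ => ⟨hP, hP.of_subset hPT⟩, fun ⟨hP, hP'⟩ => ⟨hP, hP.subset, hP'.subset⟩⟩

theorem stPaths_erase_union_stPaths_erase {e e' : V × V}
    (hdisj : ∀ P ∈ stPaths S s t, e ∈ P → e' ∉ P) :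
    stPaths (S.erase e) s t ∪ stPaths (S.erase e') s t = stPaths S s t := by
  ext P
  rw [mem_union, mem_stPaths_iff_of_subset (erase_subset e S),
    mem_stPaths_iff_of_subset (erase_subset e' S), subset_erase, subset_erase]
  have hsub : P ∈ stPaths S s t → P ⊆ S := fun hP => (mem_stPaths.1 hP).subset
  have := hdisj P
  tauto

theorem exists_incompatible_arcs (hnt : (stPaths S s t).Nontrivial) :
    ∃ e ∈ S, ∃ e' ∈ S, e ≠ e' ∧ ∀ P ∈ stPaths S s t, e ∈ P → e' ∉ P := by
  obtain ⟨P, hP, Q, hQ, hPQ⟩ := hnt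
  replace hP := mem_stPaths.1 hP
  replace hQ := mem_stPaths.1 hQ
  obtain ⟨v, w, w', hw, hmem, hmem'⟩ := hP.exists_diverging_arcs hQ hPQ
  exact ⟨(v, w), hP.subset hmem, (v, w'), hQ.subset hmem', by simpa using hw,
    fun R hR hR₁ hR₂ => hw ((mem_stPaths.1 hR).eq_of_mem_of_mem hR₁ hR₂)⟩

end Paths

section NetOutflow

/-- The entry at the vertex `v` and the arc `e` of the incidence matrix of a directed graph, with
sign `+1` at the tail of the arc and `-1` at its head (and `0` for a loop). -/
def incidence (e : V × V) (v : V) : ℝ :=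
  (if e.1 = v then 1 else 0) - (if e.2 = v then 1 else 0)

/-- The flow that carries the amount `m` along every arc of `P` and nothing elsewhere. -/
def pathFlow (P : Finset (V × V)) (m : ℝ) (e : V × V) : ℝ :=
  if e ∈ P then m else 0

theorem incidence_add_incidence (u v w : V) :
    incidence (u, v) + incidence (v, w) = incidence (u, w) := by
  ext x
  simp [incidence]

theorem incidence_fst {u v : V} (huv : u ≠ v) : incidence (u, v) u = 1 := by
  simp [incidence, huv.symm]

theorem incidence_eq_zero {e : V × V} {v : V} (h₁ : v ≠ e.1) (h₂ : v ≠ e.2) :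
    incidence e v = 0 := by
  simp [incidence, h₁.symm, h₂.symm]

theorem sum_incidence (R : Finset V) (e : V × V) :
    ∑ v ∈ R, incidence e v = (if e.1 ∈ R then 1 else 0) - (if e.2 ∈ R then 1 else 0) := by
  simp [incidence, sum_sub_distrib]

theorem sum_incidence_arcsOf {a : V} {l : List V} (hnodup : (a :: l).Nodup)
    (hlast : (a :: l).getLast? = some t) :
    ∑ e ∈ arcsOf (a :: l), incidence e = incidence (a, t) := by
  induction l generalizing a with
  | nil =>
    obtain rfl : a = t := by simpa using hlast
    ext v
    simp [arcsOf_singleton, incidence]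
  | cons b l ih =>
    have hfresh : (a, b) ∉ arcsOf (b :: l) := fun h => hnodup.notMem (fst_mem_of_mem_arcsOf h)
    rw [List.getLast?_cons_cons] at hlast
    rw [arcsOf_cons_cons, sum_insert hfresh, ih hnodup.of_cons hlast, incidence_add_incidence]

-- `flowValue E v f` is the net outflow of `f` at an arbitrary vertex `v`, not only at the source.
theorem flowValue_eq_sum_mul_incidence (f : V × V → ℝ) (v : V) :
    flowValue E v f = ∑ e ∈ E, f e * incidence e v := by
  simp only [flowValue, incidence, mul_sub, sum_sub_distrib, mul_ite, mul_one, mul_zero, sum_filter]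

theorem flowValue_sub (f g : V × V → ℝ) (v : V) :
    flowValue E v (f - g) = flowValue E v f - flowValue E v g := by
  simp only [flowValue_eq_sum_mul_incidence, Pi.sub_apply, sub_mul, sum_sub_distrib]

theorem flowValue_pathFlow (hP : IsSTPath E s t P) (m : ℝ) (v : V) :
    flowValue E v (pathFlow P m) = m * incidence (s, t) v := by
  obtain ⟨hPE, l, hnodup, hlast, rfl⟩ := isSTPath_iff.1 hP
  rw [flowValue_eq_sum_mul_incidence, ← sum_incidence_arcsOf hnodup hlast, Finset.sum_apply,
    mul_sum]
  simp only [pathFlow, ite_mul, zero_mul]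
  rw [← sum_filter, filter_mem_eq_inter, inter_eq_right.2 hPE]

theorem sum_flowValue_nonpos_of_closed {f : V × V → ℝ} {R : Finset V} (hf : ∀ e ∈ E, 0 ≤ f e)
    (hR : ∀ e ∈ E, 0 < f e → e.1 ∈ R → e.2 ∈ R) : ∑ v ∈ R, flowValue E v f ≤ 0 := by
  simp only [flowValue_eq_sum_mul_incidence]
  rw [sum_comm]
  refine sum_nonpos fun e he => ?_
  rw [← mul_sum, sum_incidence]
  obtain hzero | hpos := (hf e he).eq_or_lt
  · simp [← hzero]
  · have hclosed := hR e he hpos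
    refine mul_nonpos_of_nonneg_of_nonpos hpos.le ?_
    split_ifs <;> simp_all

end NetOutflow

variable {c f : V × V → ℝ} {γ : Finset (V × V) → ℝ}

theorem isFeasibleFlow_zero (hc : ∀ e ∈ E, 0 ≤ c e) : IsFeasibleFlow E c s t S 0 :=
  ⟨fun e he => ⟨le_rfl, hc e he⟩, fun _ _ => rfl, by simp⟩

theorem isFeasibleFlow_pathFlow (hc : ∀ e ∈ E, 0 ≤ c e) (hSE : S ⊆ E) (hP : IsSTPath S s t P) :
    IsFeasibleFlow E c s t S (pathFlow P (pathCap c P)) := by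
  have hPE : IsSTPath E s t P := hP.of_subset (hP.subset.trans hSE)
  refine ⟨fun e he => ?_, fun e he => if_neg (notMem_mono hP.subset he), fun v hvs hvt => ?_⟩
  · by_cases heP : e ∈ P
    · simpa [pathFlow, heP] using
        ⟨pathCap_nonneg fun e he => hc e (hPE.subset he), pathCap_le heP⟩
    · simpa [pathFlow, heP] using hc e he
  · have hnet := flowValue_pathFlow hPE (pathCap c P) v
    rw [incidence_eq_zero hvs hvt, mul_zero] at hnet
    exact (sub_eq_zero.1 hnet).symm

namespace IsFeasibleFlow

theorem flowValue_eq_zero (hf : IsFeasibleFlow E c s t S f) {v : V} (hvs : v ≠ s) (hvt : v ≠ t) :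
    flowValue E v f = 0 :=
  sub_eq_zero.2 (hf.2.2 v hvs hvt).symm

-- Otherwise the vertices reachable from `s` through arcs carrying flow form a set without `t`
-- that no flow leaves, although its net outflow is the value of the flow.
theorem exists_isSTPath_of_flowValue_pos (hf : IsFeasibleFlow E c s t S f)
    (hpos : 0 < flowValue E s f) : ∃ P, IsSTPath (E.filter fun e => 0 < f e) s t P := by
  by_contra hno
  let Reachable := Relation.ReflTransGen fun x y => (x, y) ∈ E.filter fun e => 0 < f e
  let R := (insert s (E.image Prod.snd)).filter (Reachable s)
  have hsR : s ∈ R := mem_filter.2 ⟨mem_insert_self _ _, .refl⟩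
  have htR : t ∉ R := fun ht => hno (exists_isSTPath_of_reflTransGen (mem_filter.1 ht).2)
  have hclosed : ∀ e ∈ E, 0 < f e → e.1 ∈ R → e.2 ∈ R := fun e he hfe h =>
    mem_filter.2 ⟨mem_insert_of_mem (mem_image_of_mem _ he),
      (mem_filter.1 h).2.tail (mem_filter.2 ⟨he, hfe⟩)⟩
  have hsum : ∑ v ∈ R, flowValue E v f = flowValue E s f :=
    sum_eq_single_of_mem s hsR fun v hv hvs =>
      hf.flowValue_eq_zero hvs (ne_of_mem_of_not_mem hv htR)
  have hnonpos := sum_flowValue_nonpos_of_closed (fun e he => (hf.1 e he).1) hclosed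
  exact (hsum ▸ hnonpos).not_gt hpos

theorem sub_pathFlow (hf : IsFeasibleFlow E c s t S f) (hP : IsSTPath E s t P) {m : ℝ}
    (hm : 0 ≤ m) (hle : ∀ e ∈ P, m ≤ f e) : IsFeasibleFlow E c s t S (f - pathFlow P m) := by
  refine ⟨fun e he => ?_, fun e he => ?_, fun v hvs hvt => ?_⟩
  · obtain ⟨hfe, hfc⟩ := hf.1 e he
    by_cases heP : e ∈ P
    · simpa [pathFlow, heP] using ⟨hle e heP, hfc.trans (le_add_of_nonneg_right hm)⟩
    · simpa [pathFlow, heP] using ⟨hfe, hfc⟩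
  · have hfe := hf.2.1 e he
    by_cases heP : e ∈ P
    · simpa [pathFlow, heP, hfe] using (hfe ▸ hle e heP).antisymm hm
    · simpa [pathFlow, heP] using hfe
  · have hnet := flowValue_sub (E := E) f (pathFlow P m) v
    rw [hf.flowValue_eq_zero hvs hvt, flowValue_pathFlow hP, incidence_eq_zero hvs hvt, mul_zero,
      sub_zero] at hnet
    exact (sub_eq_zero.1 hnet).symm

-- Subtracting the minimum of `f` along a path that carries flow shrinks the support of `f`.
theorem exists_sub_pathFlow_support_ssubset (hf : IsFeasibleFlow E c s t S f) (hst : s ≠ t)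
    (hpos : 0 < flowValue E s f) :
    ∃ P m, IsSTPath E s t P ∧ IsSTPath S s t P ∧ 0 ≤ m ∧
      IsFeasibleFlow E c s t S (f - pathFlow P m) ∧
      (E.filter fun e => 0 < (f - pathFlow P m) e) ⊂ E.filter fun e => 0 < f e := by
  obtain ⟨P, hP⟩ := hf.exists_isSTPath_of_flowValue_pos hpos
  obtain ⟨e₀, he₀, hmin⟩ := P.exists_min_image f (hP.nonempty hst)
  have hPpos : ∀ e ∈ P, 0 < f e := fun e he => (mem_filter.1 (hP.subset he)).2
  have hPE : IsSTPath E s t P := hP.of_subset (hP.subset.trans (filter_subset _ _))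
  have hPS : IsSTPath S s t P := hP.of_subset fun e he =>
    by_contra fun heS => (hPpos e he).ne' (hf.2.1 e heS)
  have hm := (hPpos e₀ he₀).le
  refine ⟨P, f e₀, hPE, hPS, hm, hf.sub_pathFlow hPE hm hmin, ?_⟩
  refine (ssubset_iff_of_subset ?_).2 ⟨e₀, hP.subset he₀, by simp [pathFlow, he₀]⟩
  refine monotone_filter_right E fun e _ hfe => ?_
  have hflow : 0 ≤ pathFlow P (f e₀) e := by
    rw [pathFlow]
    positivity
  exact hfe.trans_le (sub_le_self _ hflow)

theorem exists_path_decomposition (hf : IsFeasibleFlow E c s t S f) (hst : s ≠ t) :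
    ∃ g : Finset (V × V) → ℝ, 0 ≤ g ∧ flowValue E s f ≤ ∑ P ∈ stPaths S s t, g P ∧
      ∀ e ∈ E, ∑ P ∈ (stPaths S s t).filter (fun P => e ∈ P), g P ≤ f e := by
  induction hF : E.filter (fun e => 0 < f e) using Finset.strongInduction generalizing f with
  | H F ih =>
  obtain hneg | hpos := le_or_gt (flowValue E s f) 0
  · exact ⟨0, le_rfl, by simpa using hneg, by simpa using fun x y he => (hf.1 (x, y) he).1⟩
  obtain ⟨P, m, hPE, hPS, hm, hf', hlt⟩ := hf.exists_sub_pathFlow_support_ssubset hst hpos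
  obtain ⟨g, hg, hvalue, hload⟩ := ih _ (hF ▸ hlt) hf' rfl
  refine ⟨g + Pi.single P m, add_nonneg hg (Pi.single_nonneg.2 hm), ?_, fun e he => ?_⟩
  · rw [flowValue_sub, flowValue_pathFlow hPE, incidence_fst hst, mul_one] at hvalue
    simp only [Pi.add_apply, sum_add_distrib, sum_pi_single', mem_stPaths.2 hPS, if_true]
    linarith
  · have hload := hload e he
    rw [Pi.sub_apply, pathFlow] at hload
    simp only [Pi.add_apply, sum_add_distrib, sum_pi_single', mem_filter, mem_stPaths.2 hPS,
      true_and]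
    linarith

theorem exists_capacity_decomposition (hf : IsFeasibleFlow E c s t S f) (hst : s ≠ t)
    (hSE : S ⊆ E) :
    ∃ g : Finset (V × V) → ℝ, flowValue E s f ≤ ∑ P ∈ stPaths S s t, g P ∧
      (∀ P ∈ stPaths S s t, g P ≤ pathCap c P) ∧
      ∀ e ∈ E, ∑ P ∈ (stPaths S s t).filter (fun P => e ∈ P), g P ≤ c e := by
  obtain ⟨g, hg, hvalue, hload⟩ := hf.exists_path_decomposition hst
  have hcap : ∀ e ∈ E, ∑ P ∈ (stPaths S s t).filter (fun P => e ∈ P), g P ≤ c e :=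
    fun e he => (hload e he).trans (hf.1 e he).2
  refine ⟨g, hvalue, fun P hP => ?_, hcap⟩
  have hP' := mem_stPaths.1 hP
  refine le_pathCap (hP'.nonempty hst) fun e he => ?_
  calc g P ≤ ∑ Q ∈ (stPaths S s t).filter (fun Q => e ∈ Q), g Q :=
        single_le_sum (fun Q _ => hg Q) (mem_filter.2 ⟨hP, he⟩)
    _ ≤ c e := hcap e (hSE (hP'.subset he))

end IsFeasibleFlow

theorem GameConvex.erase_add_erase_le (hconv : GameConvex E γ) (hSE : S ⊆ E) {e e' : V × V}
    (he : e ∈ S) (hne : e ≠ e') :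
    γ (S.erase e) + γ (S.erase e') ≤ γ S + γ (S.erase e ∩ S.erase e') := by
  have hmarginal := hconv e (hSE he) (S.erase e ∩ S.erase e') (S.erase e) inter_subset_left
    (erase_subset_erase e hSE)
  have hinsert : insert e (S.erase e ∩ S.erase e') = S.erase e' := by
    rw [insert_inter_distrib, insert_erase he,
      insert_eq_of_mem (mem_erase.2 ⟨hne, he⟩), inter_eq_right.2 (erase_subset e' S)]
  rw [hinsert, insert_erase he] at hmarginal
  linarith

namespace IsFlowGame

theorem flowValue_le (hγ : IsFlowGame E c s t γ) (hSE : S ⊆ E) (hf : IsFeasibleFlow E c s t S f) :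
    flowValue E s f ≤ γ S :=
  (hγ S hSE).2 ⟨f, hf, rfl⟩

theorem capacity_nonneg (hγ : IsFlowGame E c s t γ) : ∀ e ∈ E, 0 ≤ c e := by
  obtain ⟨f, hf, -⟩ := (hγ E subset_rfl).1
  exact fun e he => (hf.1 e he).1.trans (hf.1 e he).2

theorem nonneg (hγ : IsFlowGame E c s t γ) (hSE : S ⊆ E) : 0 ≤ γ S := by
  simpa [flowValue] using hγ.flowValue_le hSE (isFeasibleFlow_zero hγ.capacity_nonneg)

theorem pathCap_le_of_isSTPath (hγ : IsFlowGame E c s t γ) (hst : s ≠ t) (hSE : S ⊆ E)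
    (hP : IsSTPath S s t P) : pathCap c P ≤ γ S := by
  have hvalue := hγ.flowValue_le hSE (isFeasibleFlow_pathFlow hγ.capacity_nonneg hSE hP)
  rwa [flowValue_pathFlow (hP.of_subset (hP.subset.trans hSE)), incidence_fst hst,
    mul_one] at hvalue

theorem le_sum_pathCap (hγ : IsFlowGame E c s t γ) (hst : s ≠ t) (hSE : S ⊆ E) :
    γ S ≤ ∑ P ∈ stPaths S s t, pathCap c P := by
  obtain ⟨f, hf, hvalue⟩ := (hγ S hSE).1
  obtain ⟨g, hsum, hcap, -⟩ := hf.exists_capacity_decomposition hst hSE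
  exact hvalue ▸ hsum.trans (sum_le_sum hcap)

theorem sum_pathCap_le_of_gameConvex (hγ : IsFlowGame E c s t γ) (hst : s ≠ t)
    (hconv : GameConvex E γ) (hSE : S ⊆ E) : ∑ P ∈ stPaths S s t, pathCap c P ≤ γ S := by
  induction S using Finset.strongInduction with
  | H S ih =>
  obtain hempty | ⟨P, hP⟩ := (stPaths S s t).eq_empty_or_nonempty
  · simpa [hempty] using hγ.nonneg hSE
  obtain hsingle | hnt := eq_singleton_or_nontrivial hP
  · simpa [hsingle] using hγ.pathCap_le_of_isSTPath hst hSE (mem_stPaths.1 hP)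
  obtain ⟨e, he, e', he', hne, hdisj⟩ := exists_incompatible_arcs hnt
  have hsub : S.erase e ⊆ E := (erase_subset e S).trans hSE
  have hsub' : S.erase e' ⊆ E := (erase_subset e' S).trans hSE
  have hinclexcl := sum_union_inter (s₁ := stPaths (S.erase e) s t)
    (s₂ := stPaths (S.erase e') s t) (f := pathCap c)
  rw [stPaths_erase_union_stPaths_erase hdisj, ← stPaths_inter] at hinclexcl
  have hlower := ih _ (erase_ssubset he) hsub
  have hlower' := ih _ (erase_ssubset he') hsub'
  have hupper := hγ.le_sum_pathCap hst (inter_subset_left (s₂ := S.erase e').trans hsub)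
  have hsuper := hconv.erase_add_erase_le hSE he hne
  linarith

end IsFlowGame

end FlowNetwork

theorem non_bottleneck_sufficiency_general
    {V : Type*} [DecidableEq V]
    (E : Finset (V × V)) (c : V × V → ℝ) (s t : V) (γ : Finset (V × V) → ℝ)
    (hst : s ≠ t) (hγ : IsFlowGame E c s t γ) (hconv : GameConvex E γ) :
    ∀ e ∈ E, ∑ P ∈ (stPaths E s t).filter (fun P => e ∈ P), pathCap c P ≤ c e := by
  intro e he
  obtain ⟨f, hf, hvalue⟩ := (hγ E subset_rfl).1
  obtain ⟨g, hsum, hcap, hload⟩ := hf.exists_capacity_decomposition hst subset_rfl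
  have hlower : ∑ P ∈ stPaths E s t, pathCap c P ≤ ∑ P ∈ stPaths E s t, g P :=
    (hγ.sum_pathCap_le_of_gameConvex hst hconv subset_rfl).trans (hvalue ▸ hsum)
  have hsaturated : ∀ P ∈ stPaths E s t, g P = pathCap c P :=
    (sum_eq_sum_iff_of_le hcap).1 ((sum_le_sum hcap).antisymm hlower)
  calc ∑ P ∈ (stPaths E s t).filter (fun P => e ∈ P), pathCap c P
      = ∑ P ∈ (stPaths E s t).filter (fun P => e ∈ P), g P :=
        sum_congr rfl fun P hP => (hsaturated P (mem_filter.1 hP).1).symm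
    _ ≤ c e := hload e he

/-- Non-bottleneck sufficiency.  If every arc lies on some `s`-`t` path
and the flow game is convex, then every non-bottleneck arc `e` satisfies
`c(e) ≥ Σ_{P ∈ 𝒫_e} c(P)`. -/
theorem non_bottleneck_sufficiency
    {V : Type*} [Fintype V] [DecidableEq V]
    (E : Finset (V × V)) (c : V × V → ℝ) (s t : V) (γ : Finset (V × V) → ℝ)
    (hst : s ≠ t) (hc : ∀ e ∈ E, 0 < c e)
    (hγ : IsFlowGame E c s t γ)
    (hcover : ∀ e ∈ E, ∃ P : Finset (V × V), IsSTPath E s t P ∧ e ∈ P)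
    (hconv : GameConvex E γ) :
    ∀ e ∈ E, ¬ IsBottleneck E c s t e →
      ∑ P ∈ (stPaths E s t).filter (fun P => e ∈ P), pathCap c P ≤ c e :=
  fun e he _ => non_bottleneck_sufficiency_general E c s t γ hst hγ hconv e he
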